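/- For every t ∈ ℝ and z ∈ ℂ, the Segal–Bargmann kernel admits the expansion B_s(t,z) = ∑_{m=0}^∞ f_m(t) ψ^s_m(z), with the series convergent, where B_s(t,z) = ((1 − s²)/(2πs√(sπ)))^{1/2} · exp(−t²/(2s) − z²/(2s) + (√(1 − s²)/s) t z). -/

import Mathlib

open MeasureTheory Complex

/-- Physicists' Hermite polynomial `H_m`, as an entire function on `ℂ`:
`H_m(z) = (-1)^m e^{z²} (d/dz)^m e^{-z²}`. -/
noncomputable def Hpoly (m : ℕ) (z : ℂ) : ℂ :=
  (-1 : ℂ) ^ m * Complex.exp (z ^ 2) * iteratedDeriv m (fun w => Complex.exp (-w ^ 2)) z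

/-- `ψ^s_m(z) = ((1-s)/(π√s))^{1/2} ((1-s)/(1+s))^{m/2} (2^m m!)^{-1/2} e^{-z²/2} H_m(z)`. -/
noncomputable def psiS (s : ℝ) (m : ℕ) (z : ℂ) : ℂ :=
  (Real.sqrt ((1 - s) / (Real.pi * Real.sqrt s)) : ℂ)
    * (Real.sqrt (((1 - s) / (1 + s)) ^ m) : ℂ)
    * (1 / (Real.sqrt ((2 : ℝ) ^ m * m.factorial) : ℂ))
    * Complex.exp (-z ^ 2 / 2) * Hpoly m z

/-- Hermite functions `f_m(t) = (2^m m! √π)^{-1/2} e^{-t²/2} H_m(t)` on `ℝ`. -/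
noncomputable def fHerm (m : ℕ) (t : ℝ) : ℂ :=
  (1 / (Real.sqrt ((2 : ℝ) ^ m * m.factorial * Real.sqrt Real.pi)) : ℂ)
    * Complex.exp (-(t : ℂ) ^ 2 / 2) * Hpoly m (t : ℂ)

/-- Segal–Bargmann kernel
`B_s(t,z) = ((1-s²)/(2πs√(sπ)))^{1/2} exp(-t²/(2s) - z²/(2s) + (√(1-s²)/s) t z)`. -/
noncomputable def Bker (s : ℝ) (t z : ℂ) : ℂ :=
  (Real.sqrt ((1 - s ^ 2) / (2 * Real.pi * s * Real.sqrt (s * Real.pi))) : ℂ)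
    * Complex.exp (-t ^ 2 / (2 * s) - z ^ 2 / (2 * s)
        + ((Real.sqrt (1 - s ^ 2) / s : ℝ) : ℂ) * t * z)

open Topology in
lemma iteratedDeriv_id_mul (n : ℕ) : ∀ (f : ℂ → ℂ) (z : ℂ), AnalyticAt ℂ f z →
    iteratedDeriv n (fun w => w * f w) z
      = z * iteratedDeriv n f z + n * iteratedDeriv (n - 1) f z := by
  induction n with
  | zero => intro f z hf; simp
  | succ n ih =>
    intro f z hf
    rw [iteratedDeriv_succ']
    have h1 : deriv (fun w => w * f w) =ᶠ[𝓝 z] (f + fun w => w * deriv f w) := by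
      filter_upwards [hf.eventually_analyticAt] with w hw
      have := (hasDerivAt_id w).mul hw.differentiableAt.hasDerivAt
      have h2 := this.deriv
      simp only [id, one_mul] at h2
      exact h2
    rw [h1.iteratedDeriv_eq, iteratedDeriv_add hf.contDiffAt
      (show AnalyticAt ℂ (fun w => w * deriv f w) z from
        analyticAt_id.mul hf.deriv).contDiffAt, ih _ _ hf.deriv, ← iteratedDeriv_succ']
    rcases n with _ | n
    · simp; ring
    · simp only [Nat.add_sub_cancel]
      rw [← iteratedDeriv_succ' (n := n)]
      push_cast
      ring

lemma gauss_differentiable : Differentiable ℂ (fun w : ℂ => Complex.exp (-w ^ 2)) := by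
  fun_prop

lemma Hpoly_zero (z : ℂ) : Hpoly 0 z = 1 := by
  simp [Hpoly, ← Complex.exp_add]

lemma gauss_rec (n : ℕ) (z : ℂ) :
    iteratedDeriv (n + 1) (fun w : ℂ => Complex.exp (-w ^ 2)) z
      = -2 * (z * iteratedDeriv n (fun w : ℂ => Complex.exp (-w ^ 2)) z
        + n * iteratedDeriv (n - 1) (fun w : ℂ => Complex.exp (-w ^ 2)) z) := by
  have hA : AnalyticAt ℂ (fun w : ℂ => Complex.exp (-w ^ 2)) z :=
    gauss_differentiable.analyticAt z
  rw [iteratedDeriv_succ', ← iteratedDeriv_id_mul n _ z hA]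
  have h : deriv (fun w : ℂ => Complex.exp (-w ^ 2))
      = fun w => (-2 : ℂ) * (w * Complex.exp (-w ^ 2)) := by
    funext w
    have := ((hasDerivAt_pow 2 w).neg).cexp
    have h2 := this.deriv
    refine Eq.trans h2 ?_
    simp
    ring
  rw [h, iteratedDeriv_const_mul_field]

lemma Hpoly_one (z : ℂ) : Hpoly 1 z = 2 * z := by
  have h := gauss_rec 0 z
  have h0 := Hpoly_zero z
  simp only [Hpoly] at *
  rw [h]
  simp at h0 ⊢
  linear_combination 2 * z * h0

lemma Hpoly_rec (n : ℕ) (z : ℂ) :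
    Hpoly (n + 2) z = 2 * z * Hpoly (n + 1) z - 2 * (n + 1) * Hpoly n z := by
  have h := gauss_rec (n + 1) z
  simp only [Hpoly]
  rw [h]
  simp only [Nat.add_sub_cancel]
  push_cast
  ring

/-- Mehler kernel. -/
noncomputable def mehlerK (x y w : ℂ) : ℂ :=
  Complex.exp (-(1 / 2) * Complex.log (1 - w ^ 2)
    - (w ^ 2 * (x ^ 2 + y ^ 2) - 2 * w * (x * y)) / (1 - w ^ 2))

lemma one_sub_sq_mem {w : ℂ} (hw : w ∈ Metric.ball (0 : ℂ) 1) :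
    1 - w ^ 2 ∈ Complex.slitPlane := by
  left
  have h1 : ‖w‖ < 1 := by simpa using hw
  have h2 : ‖w ^ 2‖ < 1 := by rw [norm_pow]; nlinarith [norm_nonneg w]
  have h3 := Complex.re_le_norm (w ^ 2)
  simp only [Complex.sub_re, Complex.one_re]
  linarith

lemma mehlerK_hasDerivAt (x y : ℂ) {w : ℂ} (hw : w ∈ Metric.ball (0 : ℂ) 1) :
    HasDerivAt (mehlerK x y)
      (mehlerK x y w * ((w * (1 - w ^ 2) - 2 * w * (x ^ 2 + y ^ 2) + 2 * (x * y) * (1 + w ^ 2))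
        / (1 - w ^ 2) ^ 2)) w := by
  have hs := one_sub_sq_mem hw
  have hne : (1 - w ^ 2) ≠ 0 := Complex.slitPlane_ne_zero hs
  have hD : HasDerivAt (fun w : ℂ => 1 - w ^ 2) (-(2 * w)) w := by
    simpa using (hasDerivAt_pow 2 w).const_sub 1
  have hL := (hD.clog hs).const_mul (-(1 / 2) : ℂ)
  have hN : HasDerivAt (fun w : ℂ => w ^ 2 * (x ^ 2 + y ^ 2) - 2 * w * (x * y))
      (2 * w * (x ^ 2 + y ^ 2) - 2 * (x * y)) w := by
    have a := (hasDerivAt_pow 2 w).mul_const (x ^ 2 + y ^ 2)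
    have b := ((hasDerivAt_id w).const_mul (2 : ℂ)).mul_const (x * y)
    refine (a.sub b).congr_deriv ?_
    simp
  have hE := (hL.sub (hN.div hD hne)).cexp
  refine hE.congr_deriv ?_
  simp only [mehlerK]
  refine congrArg₂ (· * ·) rfl ?_
  field_simp
  ring

lemma mehlerK_diffOn (x y : ℂ) : DifferentiableOn ℂ (mehlerK x y) (Metric.ball 0 1) :=
  fun _ hw => (mehlerK_hasDerivAt x y hw).differentiableAt.differentiableWithinAt

lemma mehlerK_analytic (x y : ℂ) : AnalyticAt ℂ (mehlerK x y) 0 :=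
  (mehlerK_diffOn x y).analyticAt (Metric.ball_mem_nhds 0 one_pos)

lemma mehlerK_ode (x y : ℂ) {w : ℂ} (hw : w ∈ Metric.ball (0 : ℂ) 1) :
    deriv (mehlerK x y) w =
      2 * (w * (w * deriv (mehlerK x y) w))
      + (-1) * (w * (w * (w * (w * deriv (mehlerK x y) w))))
      + (2 * (x * y)) * mehlerK x y w
      + (1 - 2 * (x ^ 2 + y ^ 2)) * (w * mehlerK x y w)
      + (2 * (x * y)) * (w * (w * mehlerK x y w))
      + (-1) * (w * (w * (w * mehlerK x y w))) := by
  have hne : (1 - w ^ 2) ≠ 0 := Complex.slitPlane_ne_zero (one_sub_sq_mem hw)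
  rw [(mehlerK_hasDerivAt x y hw).deriv]
  field_simp
  ring

lemma iteratedDeriv_id_mul0 (n : ℕ) {f : ℂ → ℂ} (hf : AnalyticAt ℂ f 0) :
    iteratedDeriv n (fun w => w * f w) 0 = n * iteratedDeriv (n - 1) f 0 := by
  rw [iteratedDeriv_id_mul n f 0 hf]; simp

lemma AnalyticAt.idm {f : ℂ → ℂ} (hf : AnalyticAt ℂ f 0) :
    AnalyticAt ℂ (fun w => w * f w) 0 := analyticAt_id.mul hf

lemma mehler_rec (x y : ℂ) (n : ℕ) :
    iteratedDeriv (n + 1) (mehlerK x y) 0 =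
      2 * (n * ((n - 1 : ℕ) * iteratedDeriv (n - 1 - 1 + 1) (mehlerK x y) 0))
      + (-1) * (n * ((n - 1 : ℕ) * ((n - 1 - 1 : ℕ) * ((n - 1 - 1 - 1 : ℕ) *
          iteratedDeriv (n - 1 - 1 - 1 - 1 + 1) (mehlerK x y) 0))))
      + (2 * (x * y)) * iteratedDeriv n (mehlerK x y) 0
      + (1 - 2 * (x ^ 2 + y ^ 2)) * (n * iteratedDeriv (n - 1) (mehlerK x y) 0)
      + (2 * (x * y)) * (n * ((n - 1 : ℕ) * iteratedDeriv (n - 1 - 1) (mehlerK x y) 0))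
      + (-1) * (n * ((n - 1 : ℕ) * ((n - 1 - 1 : ℕ) *
          iteratedDeriv (n - 1 - 1 - 1) (mehlerK x y) 0))) := by
  set M := mehlerK x y with hM
  have hA : AnalyticAt ℂ M 0 := mehlerK_analytic x y
  have hA1 := hA.idm
  have hA2 := hA1.idm
  have hA3 := hA2.idm
  have hB : AnalyticAt ℂ (deriv M) 0 := hA.deriv
  have hB1 := hB.idm
  have hB2 := hB1.idm
  have hB3 := hB2.idm
  have hB4 := hB3.idm
  have hode : deriv M =ᶠ[nhds 0] fun w =>
      2 * (w * (w * deriv M w))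
      + (-1) * (w * (w * (w * (w * deriv M w))))
      + (2 * (x * y)) * M w
      + (1 - 2 * (x ^ 2 + y ^ 2)) * (w * M w)
      + (2 * (x * y)) * (w * (w * M w))
      + (-1) * (w * (w * (w * M w))) := by
    filter_upwards [Metric.ball_mem_nhds (0 : ℂ) one_pos] with w hw
    exact mehlerK_ode x y hw
  have key := hode.iteratedDeriv_eq n
  have c1 := (analyticAt_const (v := (2 : ℂ))).mul hB2
  have c2 := (analyticAt_const (v := (-1 : ℂ))).mul hB4
  have c3 := (analyticAt_const (v := 2 * (x * y))).mul hA
  have c4 := (analyticAt_const (v := (1 - 2 * (x ^ 2 + y ^ 2)))).mul hA1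
  have c5 := (analyticAt_const (v := 2 * (x * y))).mul hA2
  have c6 := (analyticAt_const (v := (-1 : ℂ))).mul hA3
  have e : iteratedDeriv n (fun w =>
      2 * (w * (w * deriv M w))
      + (-1) * (w * (w * (w * (w * deriv M w))))
      + (2 * (x * y)) * M w
      + (1 - 2 * (x ^ 2 + y ^ 2)) * (w * M w)
      + (2 * (x * y)) * (w * (w * M w))
      + (-1) * (w * (w * (w * M w)))) 0 =
      iteratedDeriv n (fun w => 2 * (w * (w * deriv M w))) 0
      + iteratedDeriv n (fun w => (-1) * (w * (w * (w * (w * deriv M w))))) 0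
      + iteratedDeriv n (fun w => (2 * (x * y)) * M w) 0
      + iteratedDeriv n (fun w => (1 - 2 * (x ^ 2 + y ^ 2)) * (w * M w)) 0
      + iteratedDeriv n (fun w => (2 * (x * y)) * (w * (w * M w))) 0
      + iteratedDeriv n (fun w => (-1) * (w * (w * (w * M w)))) 0 := by
    have d1 := iteratedDeriv_add (n := n) c1.contDiffAt c2.contDiffAt
    have d2 := iteratedDeriv_add (n := n) (c1.add c2).contDiffAt c3.contDiffAt
    have d3 := iteratedDeriv_add (n := n) ((c1.add c2).add c3).contDiffAt c4.contDiffAt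
    have d4 := iteratedDeriv_add (n := n) (((c1.add c2).add c3).add c4).contDiffAt c5.contDiffAt
    have d5 := iteratedDeriv_add (n := n) ((((c1.add c2).add c3).add c4).add c5).contDiffAt
      c6.contDiffAt
    rw [d4, d3, d2, d1] at d5
    exact d5
  rw [e] at key
  simp only [iteratedDeriv_const_mul_field] at key
  rw [iteratedDeriv_id_mul0 n hB1, iteratedDeriv_id_mul0 _ hB, iteratedDeriv_id_mul0 n hB3,
    iteratedDeriv_id_mul0 _ hB2, iteratedDeriv_id_mul0 _ hB1, iteratedDeriv_id_mul0 _ hB,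
    iteratedDeriv_id_mul0 n hA, iteratedDeriv_id_mul0 n hA1, iteratedDeriv_id_mul0 _ hA,
    iteratedDeriv_id_mul0 n hA2, iteratedDeriv_id_mul0 _ hA1, iteratedDeriv_id_mul0 _ hA] at key
  simp only [← iteratedDeriv_succ'] at key
  exact key

lemma mehler_coeff (x y : ℂ) (n : ℕ) :
    iteratedDeriv n (mehlerK x y) 0 = Hpoly n x * Hpoly n y / 2 ^ n := by
  have h0 : iteratedDeriv 0 (mehlerK x y) 0 = Hpoly 0 x * Hpoly 0 y / 2 ^ 0 := by
    simp [Hpoly_zero, mehlerK]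
  have h1 : iteratedDeriv 1 (mehlerK x y) 0 = Hpoly 1 x * Hpoly 1 y / 2 ^ 1 := by
    have := mehler_rec x y 0
    rw [h0] at this
    simp only [zero_add] at this
    rw [this]
    simp [Hpoly_zero, Hpoly_one]; ring
  have h2 : iteratedDeriv 2 (mehlerK x y) 0 = Hpoly 2 x * Hpoly 2 y / 2 ^ 2 := by
    have := mehler_rec x y 1
    norm_num at this
    rw [this]
    simp only [iteratedDeriv_zero] at h0
    rw [h0, ← iteratedDeriv_one, h1]
    simp [Hpoly_zero, Hpoly_one, Hpoly_rec 0]; ring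
  have h3 : iteratedDeriv 3 (mehlerK x y) 0 = Hpoly 3 x * Hpoly 3 y / 2 ^ 3 := by
    have := mehler_rec x y 2
    norm_num at this
    rw [this]
    simp only [iteratedDeriv_zero] at h0
    rw [h0, ← iteratedDeriv_one, h1, h2]
    simp [Hpoly_zero, Hpoly_one, Hpoly_rec 0, Hpoly_rec 1]; ring
  have key : ∀ k : ℕ,
      iteratedDeriv k (mehlerK x y) 0 = Hpoly k x * Hpoly k y / 2 ^ k ∧
      iteratedDeriv (k + 1) (mehlerK x y) 0 = Hpoly (k + 1) x * Hpoly (k + 1) y / 2 ^ (k + 1) ∧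
      iteratedDeriv (k + 2) (mehlerK x y) 0 = Hpoly (k + 2) x * Hpoly (k + 2) y / 2 ^ (k + 2) ∧
      iteratedDeriv (k + 3) (mehlerK x y) 0
        = Hpoly (k + 3) x * Hpoly (k + 3) y / 2 ^ (k + 3) := by
    intro k
    induction k with
    | zero => exact ⟨h0, h1, h2, h3⟩
    | succ k ih =>
      obtain ⟨i0, i1, i2, i3⟩ := ih
      refine ⟨i1, i2, i3, ?_⟩
      have := mehler_rec x y (k + 3)
      have e1 : k + 3 - 1 = k + 2 := rfl
      have e2 : k + 2 - 1 = k + 1 := rfl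
      have e3 : k + 1 - 1 = k := rfl
      simp only [e1, e2, e3] at this
      have e4 : (k : ℂ) * iteratedDeriv (k - 1 + 1) (mehlerK x y) 0
          = k * iteratedDeriv k (mehlerK x y) 0 := by
        rcases k with _ | k
        · simp
        · rfl
      rw [e4, i0, i1, i2, i3] at this
      have e5 : k + 1 + 3 = k + 3 + 1 := rfl
      rw [e5, this]
      have r4 := fun z => Hpoly_rec (k + 2) z
      have r3 := fun z => Hpoly_rec (k + 1) z
      have r2 := fun z => Hpoly_rec k z
      have e6 : k + 2 + 2 = k + 3 + 1 := rfl
      have e7 : k + 1 + 2 = k + 3 := rfl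
      have e8 : k + 2 + 1 = k + 3 := rfl
      have e9 : k + 1 + 1 = k + 2 := rfl
      simp only [e6, e7, e8, e9] at r4 r3 r2
      rw [r4, r4, r3, r3, r2, r2]
      push_cast
      field_simp
      ring
  exact (key n).1

lemma mehler_hasSum (x y w : ℂ) (hw : w ∈ Metric.ball (0 : ℂ) 1) :
    HasSum (fun n : ℕ => (n.factorial : ℂ)⁻¹ * w ^ n * (Hpoly n x * Hpoly n y / 2 ^ n))
      (mehlerK x y w) := by
  have h := Complex.hasSum_taylorSeries_on_ball (mehlerK_diffOn x y) hw
  simp only [mehler_coeff, sub_zero, smul_eq_mul, ← mul_assoc] at h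
  simpa only [mul_assoc, mul_div_assoc] using h

/-- Expansion of the Segal–Bargmann kernel: `B_s(t,z) = ∑ f_m(t) ψ^s_m(z)`. -/
theorem statement6 (s : ℝ) (hs0 : 0 < s) (hs1 : s < 1) (t : ℝ) (z : ℂ) :
    HasSum (fun m : ℕ => fHerm m t * psiS s m z) (Bker s (t : ℂ) z) := by
  have hq0 : 0 < (1 - s) / (1 + s) := div_pos (by linarith) (by linarith)
  have hq1 : (1 - s) / (1 + s) < 1 := by rw [div_lt_one (by linarith)]; linarith
  set ρ : ℝ := Real.sqrt ((1 - s) / (1 + s)) with hρ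
  have hρ0 : 0 ≤ ρ := Real.sqrt_nonneg _
  have hρ2 : ρ ^ 2 = (1 - s) / (1 + s) := Real.sq_sqrt hq0.le
  have hρ1 : ρ < 1 := by nlinarith
  have hball : (ρ : ℂ) ∈ Metric.ball (0 : ℂ) 1 := by
    simpa [abs_of_nonneg hρ0] using hρ1
  have hsum := mehler_hasSum t z ρ hball
  have hpi := Real.pi_pos
  set C : ℝ := Real.sqrt ((1 - s) / (Real.pi * Real.sqrt s)) * (Real.sqrt (Real.sqrt Real.pi))⁻¹
    with hC
  have hsum2 := hsum.mul_left ((C : ℂ) * Complex.exp (-(t : ℂ) ^ 2 / 2) * Complex.exp (-z ^ 2 / 2))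
  have h1m : (1 : ℝ) - ρ ^ 2 = 2 * s / (1 + s) := by rw [hρ2]; field_simp; ring
  have hpos : 0 < 2 * s / (1 + s) := by positivity
  have hterm : (fun m : ℕ => fHerm m t * psiS s m z) = fun m : ℕ =>
      (C : ℂ) * Complex.exp (-(t : ℂ) ^ 2 / 2) * Complex.exp (-z ^ 2 / 2) *
      ((m.factorial : ℂ)⁻¹ * (ρ : ℂ) ^ m * (Hpoly m t * Hpoly m z / 2 ^ m)) := by
    funext m
    have a1 : Real.sqrt ((2 : ℝ) ^ m * m.factorial * Real.sqrt Real.pi)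
        = Real.sqrt ((2 : ℝ) ^ m * m.factorial) * Real.sqrt (Real.sqrt Real.pi) :=
      Real.sqrt_mul (by positivity) _
    have a2 : Real.sqrt (((1 - s) / (1 + s)) ^ m) = ρ ^ m := by
      rw [← hρ2, ← pow_mul, mul_comm 2 m, pow_mul, Real.sqrt_sq (by positivity)]
    have hDpos : 0 < Real.sqrt ((2 : ℝ) ^ m * m.factorial) := by positivity
    have a3 : Real.sqrt ((2 : ℝ) ^ m * m.factorial) ^ 2 = (2 : ℝ) ^ m * m.factorial :=
      Real.sq_sqrt (by positivity)
    have hEpos : 0 < Real.sqrt (Real.sqrt Real.pi) := by positivity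
    simp only [fHerm, psiS, hC, a1, a2]
    generalize Real.sqrt ((2 : ℝ) ^ m * m.factorial) = D at *
    generalize Real.sqrt (Real.sqrt Real.pi) = E at *
    have hD : (D : ℂ) ≠ 0 := by exact_mod_cast hDpos.ne'
    have hE : (E : ℂ) ≠ 0 := by exact_mod_cast hEpos.ne'
    have a4 : (D : ℂ) ^ 2 = 2 ^ m * (m.factorial : ℂ) := by exact_mod_cast a3
    have hf : (m.factorial : ℂ) ≠ 0 := by exact_mod_cast m.factorial_ne_zero
    push_cast
    field_simp
    rw [a4]
    ring
  have hval : Bker s t z = (C : ℂ) * Complex.exp (-(t : ℂ) ^ 2 / 2) * Complex.exp (-z ^ 2 / 2) *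
      mehlerK t z ρ := by
    have b1 : Complex.exp (-(1 / 2) * Complex.log (1 - (ρ : ℂ) ^ 2))
        = ((Real.sqrt (2 * s / (1 + s)))⁻¹ : ℝ) := by
      have : (1 - (ρ : ℂ) ^ 2) = ((2 * s / (1 + s) : ℝ) : ℂ) := by
        rw [← h1m]; push_cast; ring
      rw [this, ← Complex.ofReal_log hpos.le, Real.sqrt_eq_rpow, ← Real.rpow_neg hpos.le,
        Real.rpow_def_of_pos hpos, Complex.ofReal_exp]
      congr 1
      push_cast
      ring
    have b2 : Real.sqrt ((1 - s ^ 2) / (2 * Real.pi * s * Real.sqrt (s * Real.pi)))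
        = C * (Real.sqrt (2 * s / (1 + s)))⁻¹ := by
      rw [hC, ← Real.sqrt_inv (Real.sqrt Real.pi), ← Real.sqrt_inv (2 * s / (1 + s)), ← Real.sqrt_mul (by
        have : 0 < 1 - s := by linarith
        positivity), ← Real.sqrt_mul (by
        have : 0 < 1 - s := by linarith
        positivity), Real.sqrt_mul hs0.le]
      congr 1
      have : 0 < Real.sqrt s := Real.sqrt_pos.2 hs0
      have : 0 < Real.sqrt Real.pi := Real.sqrt_pos.2 hpi
      field_simp
      ring
    have b3 : Real.sqrt (1 - s ^ 2) = ρ * (1 + s) := by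
      rw [Real.sqrt_eq_iff_mul_self_eq_of_pos]
      · have : ρ * (1 + s) * (ρ * (1 + s)) = ρ ^ 2 * (1 + s) ^ 2 := by ring
        rw [this, hρ2]; field_simp; ring
      · have : 0 < ρ := Real.sqrt_pos.2 hq0
        positivity
    have hsC : (s : ℂ) ≠ 0 := by exact_mod_cast hs0.ne'
    have hs1C : (1 + s : ℂ) ≠ 0 := by
      have : (1 + s : ℝ) ≠ 0 := by positivity
      exact_mod_cast this
    have hρC : (ρ : ℂ) ^ 2 = (1 - s) / (1 + s) := by exact_mod_cast hρ2
    rw [Bker, mehlerK, sub_eq_add_neg (-(1 / 2) * _),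
      Complex.exp_add (-(1 / 2) * _), b1, b2, b3]
    have hexp : -(t : ℂ) ^ 2 / (2 * s) - z ^ 2 / (2 * s) + ((ρ * (1 + s) / s : ℝ) : ℂ) * t * z
        = -(t : ℂ) ^ 2 / 2 + (-z ^ 2 / 2 +
          -(((ρ : ℂ) ^ 2 * ((t : ℂ) ^ 2 + z ^ 2) - 2 * ρ * (t * z)) / (1 - (ρ : ℂ) ^ 2))) := by
      have h1C : (1 - (ρ : ℂ) ^ 2) = 2 * s / (1 + s) := by
        rw [hρC]; field_simp; ring
      rw [h1C, hρC]
      push_cast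
      field_simp
      ring
    rw [hexp, Complex.exp_add, Complex.exp_add]
    push_cast
    ring
  rw [hterm, hval]
  exact hsum2
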